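/- arXiv:2004.00113 — 4 statements merged into one kernel-verified Lean document; each statement's English description precedes it below -/
import Mathlib

section
/- Let S ⊆ ℝ be a convex set and let g : ℝ → ℝ be convex on S. Then the perspective function (x, y) ↦ y · g(x / y) is convex on the set {(x, y) ∈ ℝ² : y > 0 and x / y ∈ S}. -/
/-! Dividing `y • g (x / y) ≤ t` by `y` gives `g (x / y) ≤ t / y`. So the epigraph of the
perspective of `g` is, up to the order of the coordinates, the cone over a copy of the epigraph of
`g` at height `1`, and the cone over a convex set is convex. -/

section Perspective

variable {𝕜 E β : Type*} [Field 𝕜] [LinearOrder 𝕜] [AddCommGroup E] [Module 𝕜 E]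

variable (𝕜) in
/-- The cone over `s ×ˢ {1}` in `E × 𝕜`, with apex removed, described as the set of points of
positive height whose central projection to height `1` lies in `s`. It is the domain of the
perspective of a function on `s`. -/
def perspectiveCone (s : Set E) : Set (E × 𝕜) :=
  {p | 0 < p.2 ∧ p.2⁻¹ • p.1 ∈ s}

/-- The perspective `(x, y) ↦ y • g (x / y)` of a function `g` on a vector space, which is only
meaningful for `0 < y`; the quotient `x / y` is written `y⁻¹ • x`. -/
def perspective [SMul 𝕜 β] (g : E → β) (p : E × 𝕜) : β :=
  p.2 • g (p.2⁻¹ • p.1)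

variable [IsStrictOrderedRing 𝕜]

lemma coe_hull_prod_singleton_one {s : Set E} (hs : Convex 𝕜 s) :
    (ConvexCone.hull 𝕜 (s ×ˢ {(1 : 𝕜)}) : Set (E × 𝕜)) = perspectiveCone 𝕜 s := by
  rw [ConvexCone.coe_hull_of_convex (hs.prod (convex_singleton 1))]
  ext ⟨x, y⟩
  constructor
  · rintro ⟨r, hr, ⟨z, _⟩, ⟨hz, rfl⟩, hxy⟩
    obtain ⟨rfl, rfl⟩ : r • z = x ∧ r = y := by simpa using hxy
    exact ⟨hr, by simpa only [inv_smul_smul₀ hr.ne'] using hz⟩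
  · rintro ⟨hy, hx⟩
    exact ⟨y, hy, (y⁻¹ • x, 1), ⟨hx, rfl⟩, by simp [smul_inv_smul₀ hy.ne']⟩

lemma convex_perspectiveCone {s : Set E} (hs : Convex 𝕜 s) : Convex 𝕜 (perspectiveCone 𝕜 s) :=
  coe_hull_prod_singleton_one hs ▸ ConvexCone.convex _

variable [AddCommGroup β] [PartialOrder β] [Module 𝕜 β] [PosSMulMono 𝕜 β]

lemma mem_epigraph_perspective_iff {s : Set E} {g : E → β} {x : E} {y : 𝕜} {t : β} :
    (x, y) ∈ perspectiveCone 𝕜 s ∧ perspective g (x, y) ≤ t ↔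
      ((x, t), y) ∈ perspectiveCone 𝕜 {q : E × β | q.1 ∈ s ∧ g q.1 ≤ q.2} := by
  change (0 < y ∧ y⁻¹ • x ∈ s) ∧ y • g (y⁻¹ • x) ≤ t ↔
    0 < y ∧ y⁻¹ • x ∈ s ∧ g (y⁻¹ • x) ≤ y⁻¹ • t
  rw [and_assoc]
  exact and_congr_right fun hy => and_congr_right fun _ => (le_inv_smul_iff_of_pos hy).symm

theorem perspective_convexOn_general [IsOrderedAddMonoid β] {s : Set E} {g : E → β}
    (hg : ConvexOn 𝕜 s g) : ConvexOn 𝕜 (perspectiveCone 𝕜 s) (perspective g) := by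
  let swap : ((E × 𝕜) × β) →ₗ[𝕜] (E × β) × 𝕜 :=
    ((LinearMap.fst 𝕜 E 𝕜).prodMap LinearMap.id).prod (LinearMap.snd 𝕜 E 𝕜 ∘ₗ LinearMap.fst 𝕜 _ β)
  have epigraph_eq : {q : (E × 𝕜) × β | q.1 ∈ perspectiveCone 𝕜 s ∧ perspective g q.1 ≤ q.2} =
      swap ⁻¹' perspectiveCone 𝕜 {q : E × β | q.1 ∈ s ∧ g q.1 ≤ q.2} :=
    Set.ext fun _ => mem_epigraph_perspective_iff
  apply convexOn_of_convex_epigraph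
  rw [epigraph_eq]
  exact (convex_perspectiveCone hg.convex_epigraph).linear_preimage swap

end Perspective

/-- The perspective `(x, y) ↦ y * g (x / y)` of a function `g` convex on a
convex set `S ⊆ ℝ` is convex on `{(x, y) | 0 < y ∧ x / y ∈ S}`. -/
theorem perspective_convexOn (S : Set ℝ) (hS : Convex ℝ S)
    (g : ℝ → ℝ) (hg : ConvexOn ℝ S g) :
    ConvexOn ℝ {p : ℝ × ℝ | 0 < p.2 ∧ p.1 / p.2 ∈ S}
      (fun p : ℝ × ℝ => p.2 * g (p.1 / p.2)) := by
  simp only [div_eq_inv_mul]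
  exact perspective_convexOn_general hg
end

section
/- Fix an integer N ≥ 1 and positive real constants τ, L, α, β, B, N₀, and for each n = 1,…,N positive constants c_n, f_n^max, h_n, p_n^max; write R_n = B·ln(1 + p_n^max·h_n/(N₀·B)). Then there exist l, tᴹ, tˢ, p ∈ ℝᴺ and tᴿ ∈ ℝ, all with nonnegative entries, satisfying Σ_{n=1}^N l_n = L; c_n·l_n ≤ tᴹ_n·f_n^max for all n; β·L·max_m (c_m/f_m^max) ≤ tᴿ; tᴹ_n + tˢ_n ≤ τ − tᴿ for all n; α·l_n ≤ tˢ_n · B·ln(1 + p_n·h_n/(N₀·B)) for all n; and p_n ≤ p_n^max for all n; if and only if L ≤ Σ_{n=1}^N [ (τ − β·L·max_m(c_m/f_m^max)) / (1 + (α·f_n^max/c_n)/R_n) ] · (f_n^max/c_n). -/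
open Finset

/-!
At full transmit power and full CPU speed, device `n` needs time `c n / fmax n + α / R n` to map
and transmit one bit, so it handles at most the time left by the Reduce phase multiplied by its
throughput `(c n / fmax n + α / R n)⁻¹`. Summing these bounds gives necessity. For sufficiency,
split the load in proportion to the throughputs: all devices are then busy for the same time, which
fits into the available one exactly when the bound on `L` holds.
-/

section Allocation

variable {ι 𝕜 : Type*} [Fintype ι] [Field 𝕜] [LinearOrder 𝕜] [IsStrictOrderedRing 𝕜]

lemma exists_nonneg_le_mul_sum_eq_iff {L T : 𝕜} {w : ι → 𝕜} (hL : 0 ≤ L) (hw : ∀ i, 0 ≤ w i) :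
    (∃ l : ι → 𝕜, (∀ i, 0 ≤ l i) ∧ (∀ i, l i ≤ T * w i) ∧ ∑ i, l i = L) ↔
      L ≤ T * ∑ i, w i := by
  constructor
  · rintro ⟨l, -, hle, rfl⟩
    rw [mul_sum]
    exact sum_le_sum fun i _ => hle i
  · intro hLT
    have hsum_nonneg : 0 ≤ ∑ i, w i := sum_nonneg fun i _ => hw i
    rcases hsum_nonneg.eq_or_lt with hzero | hpos
    · have hw_zero : ∀ i, w i = 0 := by
        simpa [sum_eq_zero_iff_of_nonneg fun i _ => hw i] using hzero.symm
      have hL_zero : L = 0 := hL.antisymm' (by simpa [← hzero] using hLT)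
      exact ⟨0, by simp, by simp [hw_zero], by simp [hL_zero]⟩
    · have htime : L / ∑ i, w i ≤ T := (div_le_iff₀ hpos).2 hLT
      refine ⟨fun i => L / (∑ j, w j) * w i, fun i => mul_nonneg (div_nonneg hL hpos.le) (hw i),
        fun i => mul_le_mul_of_nonneg_right htime (hw i), ?_⟩
      rw [← mul_sum, div_mul_cancel₀ _ hpos.ne']

end Allocation

section Throughput

variable {𝕜 : Type*} [Field 𝕜]

/-- The number of bits per unit time that a device maps and then transmits, when it spends `c` CPU
cycles per bit at frequency `f` and sends `α` bits per mapped bit at rate `R`. -/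
def throughput (c f α R : 𝕜) : 𝕜 := (c / f + α / R)⁻¹

lemma div_one_add_mul_eq_mul_throughput {c f : 𝕜} (hc : c ≠ 0) (hf : f ≠ 0) (T α R : 𝕜) :
    T / (1 + (α * f / c) / R) * (f / c) = T * throughput c f α R := by
  have htime_per_bit : c / f + α / R = (1 + (α * f / c) / R) * (c / f) := by
    field_simp
  rw [throughput, htime_per_bit, mul_inv, inv_div, div_eq_mul_inv, mul_assoc]

variable [LinearOrder 𝕜] [IsStrictOrderedRing 𝕜] {c f α R : 𝕜}

lemma throughput_nonneg (hc : 0 ≤ c) (hf : 0 ≤ f) (hα : 0 ≤ α) (hR : 0 ≤ R) :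
    0 ≤ throughput c f α R := by
  unfold throughput
  positivity

lemma le_mul_throughput_iff (hc : 0 < c) (hf : 0 < f) (hα : 0 ≤ α) (hR : 0 < R) {l T : 𝕜} :
    l ≤ T * throughput c f α R ↔ c * l / f + α * l / R ≤ T := by
  have htime_per_bit : 0 < c / f + α / R := by positivity
  have htotal : l * (c / f + α / R) = c * l / f + α * l / R := by ring
  rw [throughput, ← div_eq_mul_inv, le_div_iff₀ htime_per_bit, htotal]

lemma le_mul_throughput_of_schedule (hc : 0 < c) (hf : 0 < f) (hα : 0 ≤ α) (hR : 0 < R)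
    {l T tM tS r : 𝕜} (htS : 0 ≤ tS) (hmap : c * l ≤ tM * f) (hshuffle : α * l ≤ tS * r)
    (hr : r ≤ R) (htime : tM + tS ≤ T) : l ≤ T * throughput c f α R := by
  have hmap_time : c * l / f ≤ tM := (div_le_iff₀ hf).2 hmap
  have hshuffle_time : α * l / R ≤ tS :=
    (div_le_iff₀ hR).2 (hshuffle.trans (mul_le_mul_of_nonneg_left hr htS))
  exact (le_mul_throughput_iff hc hf hα hR).2 ((add_le_add hmap_time hshuffle_time).trans htime)

end Throughput

section UplinkRate

/-- The rate `B ln (1 + p h / (N₀ B))` of an uplink of bandwidth `B`, noise power spectral density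
`N₀` and channel power gain `h`, as a function of the transmit power `p`. -/
noncomputable def uplinkRate (B N₀ h p : ℝ) : ℝ := B * Real.log (1 + p * h / (N₀ * B))

variable {B N₀ h : ℝ}

lemma uplinkRate_pos (hB : 0 < B) (hN₀ : 0 < N₀) (hh : 0 < h) {p : ℝ} (hp : 0 < p) :
    0 < uplinkRate B N₀ h p :=
  mul_pos hB (Real.log_pos (lt_add_of_pos_right 1 (by positivity)))

lemma uplinkRate_monotoneOn (hB : 0 ≤ B) (hN₀ : 0 ≤ N₀) (hh : 0 ≤ h) :
    MonotoneOn (uplinkRate B N₀ h) (Set.Ici 0) := by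
  intro p (hp : 0 ≤ p) q _ hpq
  have harg_pos : 0 < 1 + p * h / (N₀ * B) := by positivity
  exact mul_le_mul_of_nonneg_left (Real.log_le_log harg_pos (by gcongr)) hB

lemma isMaxOn_uplinkRate (hB : 0 ≤ B) (hN₀ : 0 ≤ N₀) (hh : 0 ≤ h) (pmax : ℝ) :
    IsMaxOn (uplinkRate B N₀ h) (Set.Icc 0 pmax) pmax :=
  fun _ hp => uplinkRate_monotoneOn hB hN₀ hh hp.1 (hp.1.trans hp.2) hp.2

end UplinkRate

theorem feasibility_iff_general {ι 𝕜 : Type*} [Fintype ι] [Field 𝕜] [LinearOrder 𝕜]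
    [IsStrictOrderedRing 𝕜] {τ L α reduceTime : 𝕜} (hL : 0 ≤ L) (hα : 0 ≤ α)
    (hreduceTime : 0 ≤ reduceTime) {c fmax pmax : ι → 𝕜} {rate : ι → 𝕜 → 𝕜}
    (hc : ∀ n, 0 < c n) (hfmax : ∀ n, 0 < fmax n) (hpmax : ∀ n, 0 ≤ pmax n)
    (hrate : ∀ n, IsMaxOn (rate n) (Set.Icc 0 (pmax n)) (pmax n))
    (hR : ∀ n, 0 < rate n (pmax n)) :
    (∃ (l tM tS p : ι → 𝕜) (tR : 𝕜),
      (∀ n, 0 ≤ l n) ∧ (∀ n, 0 ≤ tM n) ∧ (∀ n, 0 ≤ tS n) ∧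
      (∀ n, 0 ≤ p n) ∧ 0 ≤ tR ∧
      (∑ n, l n) = L ∧
      (∀ n, c n * l n ≤ tM n * fmax n) ∧
      reduceTime ≤ tR ∧
      (∀ n, tM n + tS n ≤ τ - tR) ∧
      (∀ n, α * l n ≤ tS n * rate n (p n)) ∧
      (∀ n, p n ≤ pmax n))
    ↔ L ≤ ∑ n, ((τ - reduceTime) / (1 + (α * fmax n / c n) / rate n (pmax n))) *
        (fmax n / c n) := by
  simp_rw [fun n => div_one_add_mul_eq_mul_throughput (hc n).ne' (hfmax n).ne', ← mul_sum]
  rw [← exists_nonneg_le_mul_sum_eq_iff hL fun n =>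
    throughput_nonneg (hc n).le (hfmax n).le hα (hR n).le]
  constructor
  · rintro ⟨l, tM, tS, p, tR, hl, -, htS, hp, -, hsum, hmap, hreduce, htime, hshuffle, hp_le⟩
    exact ⟨l, hl, fun n => le_mul_throughput_of_schedule (hc n) (hfmax n) hα (hR n) (htS n)
      (hmap n) (hshuffle n) (hrate n ⟨hp n, hp_le n⟩)
      ((htime n).trans (sub_le_sub_left hreduce τ)), hsum⟩
  · rintro ⟨l, hl, hl_le, hsum⟩
    exact ⟨l, fun n => c n * l n / fmax n, fun n => α * l n / rate n (pmax n), pmax, reduceTime, hl,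
      fun n => div_nonneg (mul_nonneg (hc n).le (hl n)) (hfmax n).le,
      fun n => div_nonneg (mul_nonneg hα (hl n)) (hR n).le, hpmax, hreduceTime, hsum,
      fun n => (div_mul_cancel₀ _ (hfmax n).ne').ge, le_rfl,
      fun n => (le_mul_throughput_iff (hc n) (hfmax n) hα (hR n)).1 (hl_le n),
      fun n => (div_mul_cancel₀ _ (hR n).ne').ge, fun _ => le_rfl⟩

/-- Feasibility condition (Lemma 1) of the energy-efficient collaborative
computing problem (P1): a feasible allocation exists iff the computing load
`L` does not exceed the maximum computing capacity `L_max`. -/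
theorem feasibility_iff (N : ℕ) (hN : 1 ≤ N)
    (τ L α β B N₀ : ℝ) (hτ : 0 < τ) (hL : 0 < L) (hα : 0 < α) (hβ : 0 < β)
    (hB : 0 < B) (hN₀ : 0 < N₀)
    (c fmax h pmax : Fin N → ℝ)
    (hc : ∀ n, 0 < c n) (hfmax : ∀ n, 0 < fmax n)
    (hh : ∀ n, 0 < h n) (hpmax : ∀ n, 0 < pmax n) :
    (∃ (l tM tS p : Fin N → ℝ) (tR : ℝ),
      (∀ n, 0 ≤ l n) ∧ (∀ n, 0 ≤ tM n) ∧ (∀ n, 0 ≤ tS n) ∧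
      (∀ n, 0 ≤ p n) ∧ 0 ≤ tR ∧
      (∑ n : Fin N, l n) = L ∧
      (∀ n, c n * l n ≤ tM n * fmax n) ∧
      β * L * (Finset.univ.sup'
          (Finset.univ_nonempty_iff.mpr (Fin.pos_iff_nonempty.mp hN))
          (fun m => c m / fmax m)) ≤ tR ∧
      (∀ n, tM n + tS n ≤ τ - tR) ∧
      (∀ n, α * l n ≤ tS n * (B * Real.log (1 + p n * h n / (N₀ * B)))) ∧
      (∀ n, p n ≤ pmax n))
    ↔ L ≤ ∑ n : Fin N,
        ((τ - β * L * (Finset.univ.sup'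
            (Finset.univ_nonempty_iff.mpr (Fin.pos_iff_nonempty.mp hN))
            (fun m => c m / fmax m))) /
          (1 + (α * fmax n / c n) /
            (B * Real.log (1 + pmax n * h n / (N₀ * B))))) *
          (fmax n / c n) := by
  refine feasibility_iff_general (rate := fun n => uplinkRate B N₀ (h n)) hL.le hα.le ?_ hc hfmax
    (fun n => (hpmax n).le) (fun n => isMaxOn_uplinkRate hB.le hN₀.le (hh n).le (pmax n))
    (fun n => uplinkRate_pos hB hN₀ (hh n) (hpmax n))
  exact mul_nonneg (mul_nonneg hβ.le hL.le) (le_sup'_of_le (fun m => c m / fmax m)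
    (mem_univ ⟨0, hN⟩) (div_nonneg (hc _).le (hfmax _).le))
end

section
/- Fix an integer N ≥ 1 and positive real constants τ, L, α, β, B, N₀, and for each n = 1,…,N positive constants c_n, f_n^max, h_n, p_n^max; write R_n = B·ln(1 + p_n^max·h_n/(N₀·B)). Then there exist tᴹ, tˢ ∈ ℝᴺ and tᴿ ∈ ℝ, all with nonnegative entries, satisfying c_n·(L/N) ≤ tᴹ_n·f_n^max for all n; α·(L/N) ≤ tˢ_n·R_n for all n; β·L·max_m (c_m/f_m^max) ≤ tᴿ; and tᴹ_n + tˢ_n ≤ τ − tᴿ for all n; if and only if L ≤ N · min_{n} [ (τ − β·L·max_m(c_m/f_m^max)) / (1 + (α·f_n^max/c_n)/R_n) ] · (f_n^max/c_n). -/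
open Finset

/-! A schedule exists iff the one giving every phase its minimal duration meets the deadline.
Device `n` then spends `c n / f n + α / R n` per bit on Map and Shuffle together, and the `n`-th
term of the minimum is the remaining time divided by this cost. -/

section Schedule

variable {ι M : Type*} [AddCommGroup M] [PartialOrder M] [IsOrderedAddMonoid M]

lemma exists_schedule_iff {a b : ι → M} {r : M} (ha : ∀ n, 0 ≤ a n) (hb : ∀ n, 0 ≤ b n)
    (hr : 0 ≤ r) (τ : M) :
    (∃ (tM tS : ι → M) (tR : M),
      (∀ n, 0 ≤ tM n) ∧ (∀ n, 0 ≤ tS n) ∧ 0 ≤ tR ∧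
      (∀ n, a n ≤ tM n) ∧ (∀ n, b n ≤ tS n) ∧ r ≤ tR ∧
      (∀ n, tM n + tS n ≤ τ - tR))
    ↔ ∀ n, a n + b n ≤ τ - r := by
  constructor
  · rintro ⟨tM, tS, tR, -, -, -, hMap, hShuffle, hReduce, hDeadline⟩ n
    calc a n + b n ≤ tM n + tS n := add_le_add (hMap n) (hShuffle n)
      _ ≤ τ - tR := hDeadline n
      _ ≤ τ - r := sub_le_sub_left hReduce τ
  · intro hFit
    exact ⟨a, b, r, ha, hb, hr, fun _ => le_rfl, fun _ => le_rfl, le_rfl, hFit⟩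

end Schedule

section LoadBound

variable {K : Type*} [Field K]

lemma div_one_add_mul_div_eq_div_add {c f : K} (hc : c ≠ 0) (hf : f ≠ 0) (T α R : K) :
    T / (1 + α * f / c / R) * (f / c) = T / (c / f + α / R) := by
  have hcost : (1 + α * f / c / R) * (c / f) = c / f + α / R := by
    field_simp
  rw [← hcost, ← div_div, div_eq_mul_inv _ (c / f), inv_div]

variable [LinearOrder K] [IsStrictOrderedRing K]

lemma le_load_bound_iff_time_le {c f R α : K} (hc : 0 < c) (hf : 0 < f) (hR : 0 < R) (hα : 0 ≤ α)
    (x T : K) :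
    x ≤ T / (1 + α * f / c / R) * (f / c) ↔ c * x / f + α * x / R ≤ T := by
  have hcost : 0 < c / f + α / R := add_pos_of_pos_of_nonneg (div_pos hc hf) (div_nonneg hα hR.le)
  have htime : x * (c / f + α / R) = c * x / f + α * x / R := by ring
  rw [div_one_add_mul_div_eq_div_add hc.ne' hf.ne', le_div_iff₀ hcost, htime]

lemma le_card_mul_inf'_iff {ι : Type*} [Fintype ι] [Nonempty ι] (L : K) (g : ι → K) :
    L ≤ Fintype.card ι * univ.inf' univ_nonempty g ↔ ∀ n, L / Fintype.card ι ≤ g n := by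
  have hcard : (0 : K) < Fintype.card ι := Nat.cast_pos.mpr Fintype.card_pos
  simp only [← div_le_iff₀' hcard, le_inf'_iff, mem_univ, true_imp_iff]

/-- `R n` is the uplink rate of device `n` and `r` the shortest admissible Reduce duration, which
may itself depend on the load `L`. -/
theorem blind_feasibility_iff_general {ι : Type*} [Fintype ι] [Nonempty ι] {L α r : K}
    (hL : 0 ≤ L) (hα : 0 ≤ α) (hr : 0 ≤ r) {c f R : ι → K}
    (hc : ∀ n, 0 < c n) (hf : ∀ n, 0 < f n) (hR : ∀ n, 0 < R n) (τ : K) :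
    (∃ (tM tS : ι → K) (tR : K),
      (∀ n, 0 ≤ tM n) ∧ (∀ n, 0 ≤ tS n) ∧ 0 ≤ tR ∧
      (∀ n, c n * (L / Fintype.card ι) ≤ tM n * f n) ∧
      (∀ n, α * (L / Fintype.card ι) ≤ tS n * R n) ∧
      r ≤ tR ∧
      (∀ n, tM n + tS n ≤ τ - tR))
    ↔ L ≤ Fintype.card ι * univ.inf' univ_nonempty
        (fun n => (τ - r) / (1 + α * f n / c n / R n) * (f n / c n)) := by
  have hload : 0 ≤ L / Fintype.card ι := div_nonneg hL (Nat.cast_nonneg _)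
  have hMap (n : ι) : 0 ≤ c n * (L / Fintype.card ι) / f n :=
    div_nonneg (mul_nonneg (hc n).le hload) (hf n).le
  have hShuffle (n : ι) : 0 ≤ α * (L / Fintype.card ι) / R n :=
    div_nonneg (mul_nonneg hα hload) (hR n).le
  simp only [← div_le_iff₀ (hf _), ← div_le_iff₀ (hR _), exists_schedule_iff hMap hShuffle hr,
    le_card_mul_inf'_iff, le_load_bound_iff_time_le (hc _) (hf _) (hR _) hα]

end LoadBound

lemma mul_log_one_add_div_pos {B N₀ p h : ℝ} (hB : 0 < B) (hN₀ : 0 < N₀) (hp : 0 < p)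
    (hh : 0 < h) : 0 < B * Real.log (1 + p * h / (N₀ * B)) := by
  have hsnr : 0 < p * h / (N₀ * B) := by positivity
  exact mul_pos hB (Real.log_pos (lt_add_of_pos_right 1 hsnr))

/-- Maximum computing load of the `Blind` scheme (Lemma 6): a feasible uniform
allocation (each device processing `L/N` bits) exists iff
`L ≤ N * min_n [(τ - βL max_m(c_m/f_m)) / (1 + (α f_n/c_n)/R_n)] * (f_n/c_n)`. -/
theorem blind_feasibility_iff (N : ℕ) (hN : 1 ≤ N)
    (τ L α β B N₀ : ℝ) (hτ : 0 < τ) (hL : 0 < L) (hα : 0 < α) (hβ : 0 < β)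
    (hB : 0 < B) (hN₀ : 0 < N₀)
    (c fmax h pmax : Fin N → ℝ)
    (hc : ∀ n, 0 < c n) (hfmax : ∀ n, 0 < fmax n)
    (hh : ∀ n, 0 < h n) (hpmax : ∀ n, 0 < pmax n) :
    (∃ (tM tS : Fin N → ℝ) (tR : ℝ),
      (∀ n, 0 ≤ tM n) ∧ (∀ n, 0 ≤ tS n) ∧ 0 ≤ tR ∧
      (∀ n, c n * (L / N) ≤ tM n * fmax n) ∧
      (∀ n, α * (L / N) ≤ tS n * (B * Real.log (1 + pmax n * h n / (N₀ * B)))) ∧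
      β * L * (Finset.univ.sup'
          (Finset.univ_nonempty_iff.mpr (Fin.pos_iff_nonempty.mp hN))
          (fun m => c m / fmax m)) ≤ tR ∧
      (∀ n, tM n + tS n ≤ τ - tR))
    ↔ L ≤ N * (Finset.univ.inf'
        (Finset.univ_nonempty_iff.mpr (Fin.pos_iff_nonempty.mp hN))
        (fun n =>
          ((τ - β * L * (Finset.univ.sup'
              (Finset.univ_nonempty_iff.mpr (Fin.pos_iff_nonempty.mp hN))
              (fun m => c m / fmax m))) /
            (1 + (α * fmax n / c n) /
              (B * Real.log (1 + pmax n * h n / (N₀ * B))))) *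
            (fmax n / c n))) := by
  have : Nonempty (Fin N) := Fin.pos_iff_nonempty.mp hN
  have hReduce : 0 ≤ β * L * univ.sup' univ_nonempty (fun m => c m / fmax m) :=
    mul_nonneg (mul_pos hβ hL).le <|
      le_sup'_of_le _ (mem_univ ⟨0, hN⟩) (div_pos (hc _) (hfmax _)).le
  have hRate (n : Fin N) := mul_log_one_add_div_pos hB hN₀ (hpmax n) (hh n)
  simpa only [Fintype.card_fin] using
    blind_feasibility_iff_general hL.le hα.le hReduce hc hfmax hRate τ
end

section
/- Let B > 0, h > 0, N₀ > 0, p^max > 0, t > 0 and μ ≥ 0 be real constants. Define p* = 0 if B·μ ≤ B·N₀/h; p* = B·(μ − N₀/h) if B·N₀/h < B·μ < B·N₀/h + p^max; and p* = p^max if B·μ ≥ B·N₀/h + p^max. Then E* = p*·t minimizes the function E ↦ E − μ·t·B·ln(1 + (E/t)·h/(N₀·B)) over the interval [0, t·p^max]; that is, E* ∈ [0, t·p^max] and E* − μ·t·B·ln(1 + (E*/t)·h/(N₀·B)) ≤ E − μ·t·B·ln(1 + (E/t)·h/(N₀·B)) for every E ∈ [0, t·p^max]. -/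
/-!
Transmitting at power `x` costs `x - m log (1 + x / c)` per unit of time, where `m = B μ` is the
water level and `c = B N₀ / h` the noise power referred to the transmitter. Up to a constant this
is `y - m log y` with `y = c + x`, which decreases up to `y = m` and increases afterwards. Its
minimizer over an interval is therefore the point of the interval nearest to the water level.
-/

open Set

theorem coe_projIcc_eq_ite {α : Type*} [LinearOrder α] {l u : α} (hlu : l ≤ u) (x : α) :
    (projIcc l u hlu x : α) = if x ≤ l then l else if x < u then x else u := by
  split_ifs with hxl hxu
  · rw [projIcc_of_le_left hlu hxl]
  · rw [projIcc_of_mem hlu ⟨(not_le.mp hxl).le, hxu.le⟩]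
  · rw [projIcc_of_right_le hlu (not_lt.mp hxu)]

theorem isMinOn_projIcc_of_antitoneOn_of_monotoneOn {α β : Type*} [LinearOrder α] [Preorder β]
    {f : α → β} {l u a : α} (hlu : l ≤ u) (hanti : AntitoneOn f (Icc l u ∩ Iic a))
    (hmono : MonotoneOn f (Icc l u ∩ Ici a)) :
    IsMinOn f (Icc l u) (projIcc l u hlu a) := by
  have hproj := (projIcc l u hlu a).2
  refine isMinOn_iff.mpr fun x hx ↦ ?_
  rcases le_total x a with hxa | hax
  · have hle : (projIcc l u hlu a : α) ≤ a := max_le (hx.1.trans hxa) (min_le_right u a)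
    exact hanti ⟨hx, hxa⟩ ⟨hproj, hle⟩ (le_max_of_le_right (le_min hx.2 hxa))
  · have hge : a ≤ projIcc l u hlu a := le_max_of_le_right (le_min (hax.trans hx.2) le_rfl)
    exact hmono ⟨hproj, hge⟩ ⟨hx, hax⟩ (max_le hx.1 (min_le_of_right_le hax))

theorem mul_log_sub_log_le_sub {a b : ℝ} (ha : 0 < a) (hb : 0 < b) :
    a * (Real.log b - Real.log a) ≤ b - a :=
  calc a * (Real.log b - Real.log a) = a * Real.log (b / a) := by
        rw [Real.log_div hb.ne' ha.ne']
    _ ≤ a * (b / a - 1) :=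
        mul_le_mul_of_nonneg_left (Real.log_le_sub_one_of_pos (div_pos hb ha)) ha.le
    _ = b - a := by field_simp

theorem antitoneOn_sub_mul_log (m : ℝ) :
    AntitoneOn (fun y ↦ y - m * Real.log y) (Ioi 0 ∩ Iic m) := by
  rintro a ⟨ha, -⟩ b ⟨hb, hbm : b ≤ m⟩ hab
  have hlog : 0 ≤ Real.log b - Real.log a := sub_nonneg.mpr (Real.log_le_log ha hab)
  have hgain := mul_log_sub_log_le_sub hb ha
  have hweight := mul_le_mul_of_nonneg_right hbm hlog
  dsimp only
  linarith

theorem monotoneOn_sub_mul_log (m : ℝ) :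
    MonotoneOn (fun y ↦ y - m * Real.log y) (Ioi 0 ∩ Ici m) := by
  rintro a ⟨ha, hma : m ≤ a⟩ b ⟨hb, -⟩ hab
  have hlog : 0 ≤ Real.log b - Real.log a := sub_nonneg.mpr (Real.log_le_log ha hab)
  have hgain := mul_log_sub_log_le_sub ha hb
  have hweight := mul_le_mul_of_nonneg_right hma hlog
  dsimp only
  linarith

theorem isMinOn_sub_mul_log {l u : ℝ} (hl : 0 < l) (hlu : l ≤ u) (m : ℝ) :
    IsMinOn (fun y ↦ y - m * Real.log y) (Icc l u) (projIcc l u hlu m) := by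
  have hpos : Icc l u ⊆ Ioi 0 := fun _ hy ↦ hl.trans_le hy.1
  exact isMinOn_projIcc_of_antitoneOn_of_monotoneOn hlu
    ((antitoneOn_sub_mul_log m).mono (inter_subset_inter_left _ hpos))
    ((monotoneOn_sub_mul_log m).mono (inter_subset_inter_left _ hpos))

theorem coe_projIcc_add_left {α : Type*} [AddCommGroup α] [LinearOrder α] [IsOrderedAddMonoid α]
    {l u : α} (hlu : l ≤ u) (c x : α) :
    (projIcc (c + l) (c + u) (add_le_add_right hlu c) x : α) = c + projIcc l u hlu (x - c) := by
  rw [coe_projIcc, coe_projIcc, ← max_add_add_left, ← min_add_add_left, add_sub_cancel]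

theorem isMinOn_sub_mul_log_one_add_div {c l u : ℝ} (hc : 0 < c) (hl : 0 < c + l) (hlu : l ≤ u)
    (m : ℝ) :
    IsMinOn (fun x ↦ x - m * Real.log (1 + x / c)) (Icc l u) (projIcc l u hlu (m - c)) := by
  have hlog : ∀ x ∈ Icc l u, Real.log (1 + x / c) = Real.log (c + x) - Real.log c := by
    intro x hx
    have hcx : 0 < c + x := hl.trans_le (add_le_add_right hx.1 c)
    rw [← Real.log_div hcx.ne' hc.ne', add_div, div_self hc.ne']
  refine isMinOn_iff.mpr fun x hx ↦ ?_
  have hshifted := isMinOn_iff.mp (isMinOn_sub_mul_log hl (add_le_add_right hlu c) m) (c + x)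
    ⟨add_le_add_right hx.1 c, add_le_add_right hx.2 c⟩
  rw [coe_projIcc_add_left hlu] at hshifted
  rw [hlog _ (projIcc l u hlu (m - c)).2, hlog x hx]
  linarith

theorem isMinOn_mul_comp_div {𝕜 : Type*} [Field 𝕜] [LinearOrder 𝕜] [IsStrictOrderedRing 𝕜]
    {f : 𝕜 → 𝕜} {s : Set 𝕜} {p t : 𝕜} (ht : 0 < t) (hmin : IsMinOn f s p) :
    IsMinOn (fun E ↦ t * f (E / t)) ((· / t) ⁻¹' s) (p * t) := by
  refine isMinOn_iff.mpr fun E hE ↦ ?_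
  rw [mul_div_cancel_right₀ p ht.ne']
  exact mul_le_mul_of_nonneg_left (isMinOn_iff.mp hmin _ hE) ht.le

theorem shuffle_subproblem_solution_general (B h N₀ pmax t μ : ℝ)
    (hB : 0 < B) (hh : 0 < h) (hN₀ : 0 < N₀) (hpmax : 0 ≤ pmax)
    (ht : 0 < t)
    (p : ℝ)
    (hp : p = if B * μ ≤ B * N₀ / h then 0
      else if B * μ < B * N₀ / h + pmax then B * (μ - N₀ / h)
      else pmax) :
    p * t ∈ Set.Icc 0 (t * pmax) ∧
      ∀ E ∈ Set.Icc 0 (t * pmax),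
        p * t - μ * t * B * Real.log (1 + (p * t / t) * h / (N₀ * B)) ≤
          E - μ * t * B * Real.log (1 + (E / t) * h / (N₀ * B)) := by
  have hc : 0 < B * N₀ / h := by positivity
  have hp_proj : p = projIcc 0 pmax hpmax (B * μ - B * N₀ / h) := by
    rw [hp, coe_projIcc_eq_ite, mul_sub, ← mul_div_assoc]
    simp only [sub_nonpos, sub_lt_iff_lt_add']
  have hp_mem : p ∈ Icc 0 pmax := hp_proj ▸ Subtype.coe_prop _
  have hcost (E : ℝ) : E - μ * t * B * Real.log (1 + E / t * h / (N₀ * B)) =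
      t * (E / t - B * μ * Real.log (1 + E / t / (B * N₀ / h))) := by
    rw [div_div_eq_mul_div, mul_comm N₀ B, mul_sub, mul_div_cancel₀ E ht.ne']
    ring
  have hmin := isMinOn_mul_comp_div ht
    (isMinOn_sub_mul_log_one_add_div hc (by rwa [add_zero]) hpmax (B * μ))
  rw [← hp_proj] at hmin
  refine ⟨⟨mul_nonneg hp_mem.1 ht.le, ?_⟩, fun E hE ↦ ?_⟩
  · rw [mul_comm]
    exact mul_le_mul_of_nonneg_left hp_mem.2 ht.le
  · rw [hcost, hcost]
    exact isMinOn_iff.mp hmin E ⟨div_nonneg hE.1 ht.le, (div_le_iff₀' ht).mpr hE.2⟩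

/-- Solution of the Shuffle-phase Lagrangian subproblem (Lemma 4): the RF
energy `E* = p* t`, where `p*` is the optimal RF transmit power, minimizes
`E ↦ E - μ t B ln (1 + (E/t) h / (N₀ B))` over `[0, t p^max]`. -/
theorem shuffle_subproblem_solution (B h N₀ pmax t μ : ℝ)
    (hB : 0 < B) (hh : 0 < h) (hN₀ : 0 < N₀) (hpmax : 0 < pmax)
    (ht : 0 < t) (hμ : 0 ≤ μ)
    (p : ℝ)
    (hp : p = if B * μ ≤ B * N₀ / h then 0
      else if B * μ < B * N₀ / h + pmax then B * (μ - N₀ / h)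
      else pmax) :
    p * t ∈ Set.Icc 0 (t * pmax) ∧
      ∀ E ∈ Set.Icc 0 (t * pmax),
        p * t - μ * t * B * Real.log (1 + (p * t / t) * h / (N₀ * B)) ≤
          E - μ * t * B * Real.log (1 + (E / t) * h / (N₀ * B)) :=
  shuffle_subproblem_solution_general B h N₀ pmax t μ hB hh hN₀ hpmax.le ht p hp
end
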